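/- arXiv:1511.08348 — 2 statements merged into one kernel-verified Lean document; each statement's English description precedes it below -/
import Mathlib

section
/- Let k be a field and Q a finite quiver. For all m ≥ 1 and p ≥ 0: (i) E_{m,p+1} maps the image of D_{m−1,p} into the image of D_{m,p+1}, so E_{m,p+1} induces a well-defined linear map k(Q_m//Q_{p+1})/Im(D_{m−1,p}) → k(Q_{m+1}//Q_{p+2})/Im(D_{m,p+1}); (ii) E_{m,p} maps the kernel of D_{m,p} into the kernel of D_{m+1,p+1}, so E_{m,p} restricts to a well-defined linear map Ker(D_{m,p}) → Ker(D_{m+1,p+1}). -/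
/-!
Up to sign, `D` and `E` are built from `L` (extension at the target) and `R` (extension at the
source): `D = L ± R` and `E = -R`. Extending a path at one end does not interfere with extending it
at the other, so `L R = R L`, and the sign in `D` is unchanged when both lengths grow by one; hence
`D E = E D`. A map commuting with `D` preserves its image and its kernel.
-/

open Quiver

/-- Pairs of parallel paths: a path `γ` of length `m` and a path `β` of length `p`
with the same source and the same target.  This is the set `Q_m // Q_p`. -/
structure ParPair (V : Type) [Quiver V] (m p : ℕ) where
  src : V
  tgt : V
  γ : Quiver.Path src tgt
  β : Quiver.Path src tgt
  hγ : γ.length = m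
  hβ : β.length = p

/-- The "left extension" linear map sending a basis element `(γ, β)` to
`Σ_{a ∈ Q₁, s(a) = t(γ)} (aγ, aβ)`. -/
noncomputable def Lmap (k : Type) [Field k] (V : Type) [Quiver V] [Fintype V]
    [∀ a b : V, Fintype (a ⟶ b)] (m p : ℕ) :
    (ParPair V m p →₀ k) →ₗ[k] (ParPair V (m + 1) (p + 1) →₀ k) :=
  Finsupp.lift _ k _ fun x =>
    ∑ c : V, ∑ e : x.tgt ⟶ c,
      Finsupp.single ⟨x.src, c, x.γ.cons e, x.β.cons e, by simp [x.hγ], by simp [x.hβ]⟩ (1 : k)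

/-- The "right extension" linear map sending a basis element `(γ, β)` to
`Σ_{a ∈ Q₁, t(a) = s(γ)} (γa, βa)`. -/
noncomputable def Rmap (k : Type) [Field k] (V : Type) [Quiver V] [Fintype V]
    [∀ a b : V, Fintype (a ⟶ b)] (m p : ℕ) :
    (ParPair V m p →₀ k) →ₗ[k] (ParPair V (m + 1) (p + 1) →₀ k) :=
  Finsupp.lift _ k _ fun x =>
    ∑ c : V, ∑ e : c ⟶ x.src,
      Finsupp.single ⟨c, x.tgt, (e.toPath).comp x.γ, (e.toPath).comp x.β,
        by
          have h := x.hγ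
          simp only [Quiver.Path.length_comp, Quiver.Hom.toPath,
            Quiver.Path.length_cons, Quiver.Path.length_nil]
          omega,
        by
          have h := x.hβ
          simp only [Quiver.Path.length_comp, Quiver.Hom.toPath,
            Quiver.Path.length_cons, Quiver.Path.length_nil]
          omega⟩ (1 : k)

/-- The linear map `D_{m,p} : k(Q_m//Q_p) → k(Q_{m+1}//Q_{p+1})` given on basis elements
by `D_{m,p}(γ, β) = Σ_{a} (aγ, aβ) + (−1)^{p+m+1} Σ_{a} (γa, βa)`. -/
noncomputable def Dmap (k : Type) [Field k] (V : Type) [Quiver V] [Fintype V]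
    [∀ a b : V, Fintype (a ⟶ b)] (m p : ℕ) :
    (ParPair V m p →₀ k) →ₗ[k] (ParPair V (m + 1) (p + 1) →₀ k) :=
  Lmap k V m p + ((-1 : k) ^ (p + m + 1)) • Rmap k V m p


/-- The linear map `E_{m,p} : k(Q_m//Q_p) → k(Q_{m+1}//Q_{p+1})` given on basis elements
by `E_{m,p}(γ, β) = −Σ_{a ∈ Q₁, t(a)=s(γ)} (γa, βa)`. -/
noncomputable def Emap (k : Type) [Field k] (V : Type) [Quiver V] [Fintype V]
    [∀ a b : V, Fintype (a ⟶ b)] (m p : ℕ) :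
    (ParPair V m p →₀ k) →ₗ[k] (ParPair V (m + 1) (p + 1) →₀ k) :=
  - Rmap k V m p

namespace ParPair

variable {V : Type} [Quiver V] {m p : ℕ}

/-- The parallel pair `(aγ, aβ)` obtained from `x = (γ, β)` and an arrow `a` starting at the common
target of `γ` and `β`; the arrow is bundled with its other endpoint, as an element of
`Quiver.Star`. -/
def extendTarget (x : ParPair V m p) (a : Quiver.Star x.tgt) : ParPair V (m + 1) (p + 1) where
  src := x.src
  tgt := a.1
  γ := x.γ.cons a.2
  β := x.β.cons a.2
  hγ := by simp [x.hγ]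
  hβ := by simp [x.hβ]

/-- The parallel pair `(γa, βa)` obtained from `x = (γ, β)` and an arrow `a` ending at the common
source of `γ` and `β`; the arrow is bundled with its other endpoint, as an element of
`Quiver.Costar`. -/
def extendSource (x : ParPair V m p) (a : Quiver.Costar x.src) : ParPair V (m + 1) (p + 1) where
  src := a.1
  tgt := x.tgt
  γ := a.2.toPath.comp x.γ
  β := a.2.toPath.comp x.β
  hγ := by simp [x.hγ, add_comm]
  hβ := by simp [x.hβ, add_comm]

theorem extendTarget_extendSource (x : ParPair V m p) (a : Quiver.Costar x.src)
    (b : Quiver.Star x.tgt) :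
    (x.extendSource a).extendTarget b = (x.extendTarget b).extendSource a :=
  rfl

end ParPair

section ExtensionMaps

variable (k : Type) [Field k] (V : Type) [Quiver V] [Fintype V] [∀ a b : V, Fintype (a ⟶ b)]
  (m p : ℕ)

theorem Lmap_single (x : ParPair V m p) (r : k) :
    Lmap k V m p (Finsupp.single x r) =
      ∑ a : Quiver.Star x.tgt, Finsupp.single (x.extendTarget a) r := by
  simp [Lmap, ParPair.extendTarget, Fintype.sum_sigma, Finset.smul_sum]

theorem Rmap_single (x : ParPair V m p) (r : k) :
    Rmap k V m p (Finsupp.single x r) =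
      ∑ a : Quiver.Costar x.src, Finsupp.single (x.extendSource a) r := by
  simp [Rmap, ParPair.extendSource, Fintype.sum_sigma, Finset.smul_sum]

theorem Lmap_comp_Rmap :
    Lmap k V (m + 1) (p + 1) ∘ₗ Rmap k V m p = Rmap k V (m + 1) (p + 1) ∘ₗ Lmap k V m p := by
  refine Finsupp.lhom_ext fun x r => ?_
  calc Lmap k V (m + 1) (p + 1) (Rmap k V m p (Finsupp.single x r))
    _ = ∑ a : Quiver.Costar x.src, ∑ b : Quiver.Star x.tgt,
          Finsupp.single ((x.extendSource a).extendTarget b) r := by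
      simp only [Rmap_single, map_sum, Lmap_single]
      rfl
    _ = ∑ b : Quiver.Star x.tgt, ∑ a : Quiver.Costar x.src,
          Finsupp.single ((x.extendTarget b).extendSource a) r := by
      simp only [ParPair.extendTarget_extendSource]
      exact Finset.sum_comm
    _ = Rmap k V (m + 1) (p + 1) (Lmap k V m p (Finsupp.single x r)) := by
      simp only [Lmap_single, map_sum, Rmap_single]
      rfl

theorem Dmap_comp_Rmap :
    Dmap k V (m + 1) (p + 1) ∘ₗ Rmap k V m p = Rmap k V (m + 1) (p + 1) ∘ₗ Dmap k V m p := by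
  have sign_eq : (-1 : k) ^ (p + 1 + (m + 1) + 1) = (-1) ^ (p + m + 1) := by ring
  simp only [Dmap, sign_eq, LinearMap.add_comp, LinearMap.smul_comp, LinearMap.comp_add,
    LinearMap.comp_smul, Lmap_comp_Rmap]

theorem Dmap_comp_Emap :
    Dmap k V (m + 1) (p + 1) ∘ₗ Emap k V m p = Emap k V (m + 1) (p + 1) ∘ₗ Dmap k V m p := by
  simp only [Emap, LinearMap.comp_neg, LinearMap.neg_comp, Dmap_comp_Rmap]

end ExtensionMaps

/-- for a field `k`, a finite quiver `Q`, and all `m ≥ 1` (here `m = m' + 1`)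
and `p ≥ 0`:
(i) `E_{m,p+1}` maps the image of `D_{m−1,p}` into the image of `D_{m,p+1}`;
(ii) `E_{m,p}` maps the kernel of `D_{m,p}` into the kernel of `D_{m+1,p+1}`. -/
theorem Emap_image_and_kernel (k : Type) [Field k] (V : Type) [Quiver V] [Fintype V]
    [∀ a b : V, Fintype (a ⟶ b)] (m' p : ℕ) :
    Submodule.map (Emap k V (m' + 1) (p + 1)) (LinearMap.range (Dmap k V m' p))
        ≤ LinearMap.range (Dmap k V (m' + 1) (p + 1))
      ∧ Submodule.map (Emap k V (m' + 1) p) (LinearMap.ker (Dmap k V (m' + 1) p))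
        ≤ LinearMap.ker (Dmap k V (m' + 2) (p + 1)) := by
  constructor
  · rw [← LinearMap.range_comp, ← Dmap_comp_Emap]
    exact LinearMap.range_comp_le_range _ _
  · rw [Submodule.map_le_iff_le_comap, ← LinearMap.ker_comp, Dmap_comp_Emap]
    exact LinearMap.ker_le_ker_comp _ _
end

section
/- Let k be a field and V a k-vector space. The horizontal composition μ and the vertical composition ν of the multiple-loops PROP satisfy the interchange law: for all f₁ ∈ P(m₁, p₁), f₂ ∈ P(m₂, p₂), g₁ ∈ P(p₁, n₁), g₂ ∈ P(p₂, n₂), one has ν(μ(f₁ ⊗ f₂) ⊗ μ(g₁ ⊗ g₂)) = μ(ν(f₁ ⊗ g₁) ⊗ ν(f₂ ⊗ g₂)); that is, (g₁ ∘ f₁) ⊙ (g₂ ∘ f₂) = (g₁ ⊙ g₂) ∘ (f₁ ⊙ f₂) in P. -/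
open scoped TensorProduct

/-- The `n`-th tensor power `V^{⊗n}` of the `k`-vector space `V`. -/
abbrev TP (k V : Type) [Field k] [AddCommGroup V] [Module k V] (n : ℕ) : Type :=
  ⨂[k] _ : Fin n, V

variable (k V : Type) [Field k] [AddCommGroup V] [Module k V]

/-- `V^{⊗(p−1)}`, with the convention `V^{⊗(−1)} := 0`. -/
def Shift (k V : Type) [Field k] [AddCommGroup V] [Module k V] : ℕ → Type
  | 0 => PUnit
  | q + 1 => TP k V q

noncomputable instance Shift.addCommGroup : ∀ p : ℕ, AddCommGroup (Shift k V p)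
  | 0 => inferInstanceAs (AddCommGroup PUnit)
  | q + 1 => inferInstanceAs (AddCommGroup (TP k V q))

noncomputable instance Shift.module : ∀ p : ℕ, Module k (Shift k V p)
  | 0 => inferInstanceAs (Module k PUnit)
  | q + 1 => inferInstanceAs (Module k (TP k V q))

/-- The spaces `P(m, p) := Hom_k(V^{⊗m}, V^{⊗(p−1)}) ⊕ Hom_k(V^{⊗m}, V^{⊗p})` of the
multiple-loops PROP; the two summands are the first and second components. -/
def LoopP (m p : ℕ) : Type :=
  (TP k V m →ₗ[k] Shift k V p) × (TP k V m →ₗ[k] TP k V p)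

/-- The canonical isomorphism `V^{⊗a} ⊗ V^{⊗b} ≅ V^{⊗(a+b)}`. -/
noncomputable def tpe (a b : ℕ) : (TP k V a ⊗[k] TP k V b) ≃ₗ[k] TP k V (a + b) :=
  (PiTensorProduct.tmulEquiv (R := k) (M := V) (ι := Fin a) (ι₂ := Fin b)).trans
    (PiTensorProduct.reindex k (fun _ : Fin a ⊕ Fin b => V) finSumFinEquiv)

/-- The tensor product of linear maps between tensor powers, as a map between tensor
powers (via the canonical isomorphisms). -/
noncomputable def tmul2 {m p n q : ℕ} (f : TP k V m →ₗ[k] TP k V p)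
    (g : TP k V n →ₗ[k] TP k V q) : TP k V (m + n) →ₗ[k] TP k V (p + q) :=
  (tpe k V p q).toLinearMap ∘ₗ TensorProduct.map f g ∘ₗ (tpe k V m n).symm.toLinearMap

/-- Transport `V^{⊗a} → Shift b` along `a + 1 = b`. -/
def shiftCast {a b : ℕ} (h : a + 1 = b) : TP k V a →ₗ[k] Shift k V b := by
  subst h; exact LinearMap.id

/-- Collapse `Shift p ⊗ V^{⊗q} → Shift (p+q)` (zero when `p = 0`). -/
noncomputable def mulSL : ∀ (p q : ℕ), (Shift k V p ⊗[k] TP k V q) →ₗ[k] Shift k V (p + q)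
  | 0, _ => 0
  | p' + 1, q =>
      (shiftCast k V (show p' + q + 1 = p' + 1 + q by omega))
        ∘ₗ (tpe k V p' q).toLinearMap

/-- Collapse `V^{⊗p} ⊗ Shift q → Shift (p+q)` (zero when `q = 0`). -/
noncomputable def mulLS : ∀ (p q : ℕ), (TP k V p ⊗[k] Shift k V q) →ₗ[k] Shift k V (p + q)
  | _, 0 => 0
  | p, q' + 1 =>
      (shiftCast k V (show p + q' + 1 = p + (q' + 1) by omega))
        ∘ₗ (tpe k V p q').toLinearMap

/-- The horizontal composition `μ : P(m,p) ⊗ P(n,q) → P(m+n, p+q)` of the multiple-loops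
PROP: on component elements it is the tensor product of linear maps, placed in the
component determined by the total output length, except that the product of two first
components is `0`. -/
noncomputable def muLoop {m p n q : ℕ} (f : LoopP k V m p) (g : LoopP k V n q) :
    LoopP k V (m + n) (p + q) :=
  ⟨(mulSL k V p q ∘ₗ TensorProduct.map f.1 g.2 ∘ₗ (tpe k V m n).symm.toLinearMap)
      + (mulLS k V p q ∘ₗ TensorProduct.map f.2 g.1 ∘ₗ (tpe k V m n).symm.toLinearMap),
    tmul2 k V f.2 g.2⟩

/-- The vertical composition `ν : P(m,p) ⊗ P(p,n) → P(m,n)` of the multiple-loops PROP: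
`ν(f ⊗ g)` is zero on the first component of `f`, and composes `g` after `f` otherwise. -/
noncomputable def nuLoop {m p n : ℕ} (f : LoopP k V m p) (g : LoopP k V p n) :
    LoopP k V m n :=
  ⟨g.1 ∘ₗ f.2, g.2 ∘ₗ f.2⟩

/-!
`ν` only sees `f₁ ⊙ f₂` through its second component, the genuine tensor product
`f₁.2 ⊗ f₂.2`. Hence each surviving term of `(g₁ ⊙ g₂) ∘ (f₁ ⊙ f₂)` is a tensor product of
components of `g₁` and `g₂`, precomposed with `f₁.2 ⊗ f₂.2` and followed by a collapse map.
Naturality of `V^{⊗p} ⊗ V^{⊗q} ≅ V^{⊗(p+q)}` and functoriality of `⊗` move the composition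
inside each tensor factor, whatever the collapse map is.
-/

section TensorPowers

variable {k V} {m₁ m₂ p₁ p₂ n₁ n₂ : ℕ}

theorem tpe_symm_comp_tmul2 (f₁ : TP k V m₁ →ₗ[k] TP k V p₁) (f₂ : TP k V m₂ →ₗ[k] TP k V p₂) :
    (tpe k V p₁ p₂).symm.toLinearMap ∘ₗ tmul2 k V f₁ f₂
      = TensorProduct.map f₁ f₂ ∘ₗ (tpe k V m₁ m₂).symm.toLinearMap := by
  rw [tmul2, ← LinearMap.comp_assoc, LinearEquiv.symm_comp, LinearMap.id_comp]

theorem map_comp_tpe_symm_comp_tmul2 {A B : Type*} [AddCommMonoid A] [Module k A]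
    [AddCommMonoid B] [Module k B]
    (g₁ : TP k V p₁ →ₗ[k] A) (g₂ : TP k V p₂ →ₗ[k] B)
    (f₁ : TP k V m₁ →ₗ[k] TP k V p₁) (f₂ : TP k V m₂ →ₗ[k] TP k V p₂) :
    TensorProduct.map g₁ g₂ ∘ₗ (tpe k V p₁ p₂).symm.toLinearMap ∘ₗ tmul2 k V f₁ f₂
      = TensorProduct.map (g₁ ∘ₗ f₁) (g₂ ∘ₗ f₂) ∘ₗ (tpe k V m₁ m₂).symm.toLinearMap := by
  rw [tpe_symm_comp_tmul2, ← LinearMap.comp_assoc, ← TensorProduct.map_comp]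

theorem tmul2_comp_tmul2
    (g₁ : TP k V p₁ →ₗ[k] TP k V n₁) (g₂ : TP k V p₂ →ₗ[k] TP k V n₂)
    (f₁ : TP k V m₁ →ₗ[k] TP k V p₁) (f₂ : TP k V m₂ →ₗ[k] TP k V p₂) :
    tmul2 k V g₁ g₂ ∘ₗ tmul2 k V f₁ f₂ = tmul2 k V (g₁ ∘ₗ f₁) (g₂ ∘ₗ f₂) := by
  rw [tmul2, LinearMap.comp_assoc, LinearMap.comp_assoc, map_comp_tpe_symm_comp_tmul2, ← tmul2]

end TensorPowers

/-- the horizontal composition `μ` and vertical composition `ν` of the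
multiple-loops PROP satisfy the interchange law
`(g₁ ∘ f₁) ⊙ (g₂ ∘ f₂) = (g₁ ⊙ g₂) ∘ (f₁ ⊙ f₂)`. -/
theorem loopPROP_interchange (k V : Type) [Field k] [AddCommGroup V] [Module k V]
    (m₁ p₁ n₁ m₂ p₂ n₂ : ℕ)
    (f₁ : LoopP k V m₁ p₁) (f₂ : LoopP k V m₂ p₂)
    (g₁ : LoopP k V p₁ n₁) (g₂ : LoopP k V p₂ n₂) :
    muLoop k V (nuLoop k V f₁ g₁) (nuLoop k V f₂ g₂)
      = nuLoop k V (muLoop k V f₁ f₂) (muLoop k V g₁ g₂) := by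
  refine Prod.ext ?fst ?snd
  case fst =>
    simp only [muLoop, nuLoop, LinearMap.add_comp, LinearMap.comp_assoc,
      map_comp_tpe_symm_comp_tmul2]
  case snd => exact (tmul2_comp_tmul2 g₁.2 g₂.2 f₁.2 f₂.2).symm
end
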